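/- For every integer n > 1 and every DWA B = ({a,b,i}, Q, q₀, δ, c) with exactly n + 2 states that realizes O_n, write q_j = δ̂(q₀, i^j) for 0 ≤ j ≤ n and s = δ̂(q₀, i^{n+1}). Then: the states q_0, …, q_n, s are pairwise distinct; δ(s, x) = s and c(s, x) = 0 for every letter x; for every j ≤ n, c(q_j, i) = 0, c(q_j, a) > 0 and c(q_j, b) < 0; and δ(q_j, a) = δ(q_j, b) = q_{j+1} for every j < n, while δ(q_n, a) = δ(q_n, b) = s. In other words, every minimal-state DWA realizing O_n is structurally isomorphic to the chain automaton. -/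

import Mathlib

/-- A deterministic weighted automaton (DWA) over alphabet `A` with state space `Q`. -/
structure DWA (A : Type) (Q : Type) where
  init : Q
  δ : Q → A → Q
  c : Q → A → ℤ

/-- The extended transition function `δ̂`. -/
def DWA.run {A Q : Type} (M : DWA A Q) (q : Q) (w : List A) : Q :=
  w.foldl M.δ q

/-- The accumulated weight of the run on `w` starting in state `q`. -/
def DWA.valFrom {A Q : Type} (M : DWA A Q) : Q → List A → ℤ
  | _, [] => 0
  | q, x :: w => M.c q x + M.valFrom (M.δ q x) w

/-- The value `A(w)` of a word: the sum of the weights along the run from the initial state. -/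
def DWA.val {A Q : Type} (M : DWA A Q) (w : List A) : ℤ :=
  M.valFrom M.init w

/-- The three-letter alphabet `{a, b, i}`. -/
inductive ABI where
  | a : ABI
  | b : ABI
  | i : ABI
deriving DecidableEq

open Classical in
/-- The observation function `O_n` on nonempty words over `{a, b, i}`:
`O_n(w) = 1` if `w` consists only of `i`'s, or `i^{n+1}` is a prefix of `w`, or
`i^k·a·b^{n-k}` or `i^k·b·a^{n-k}` is a prefix of `w` for some `k < n`; otherwise `O_n(w) = 2`
if the first letter of `w` different from `i` is `a`, and `O_n(w) = 0` if it is `b`. -/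
noncomputable def Obs (n : ℕ) (w : List ABI) : ℕ :=
  if (∀ x ∈ w, x = ABI.i) ∨
      (List.replicate (n + 1) ABI.i <+: w) ∨
      (∃ k < n, List.replicate k ABI.i ++ [ABI.a] ++ List.replicate (n - k) ABI.b <+: w) ∨
      (∃ k < n, List.replicate k ABI.i ++ [ABI.b] ++ List.replicate (n - k) ABI.a <+: w)
  then 1
  else if ∃ k, List.replicate k ABI.i ++ [ABI.a] <+: w then 2
  else 0

/-- A DWA `M` over `{a, b, i}` realizes `O_n` if, for every nonempty word `w`,
`M(w) < 0 ↔ O_n(w) = 0`, `M(w) = 0 ↔ O_n(w) = 1`, and `M(w) > 0 ↔ O_n(w) = 2`. -/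
def Realizes {Q : Type} (n : ℕ) (M : DWA ABI Q) : Prop :=
  ∀ w : List ABI, w ≠ [] →
    (M.val w < 0 ↔ Obs n w = 0) ∧ (M.val w = 0 ↔ Obs n w = 1) ∧ (0 < M.val w ↔ Obs n w = 2)


namespace MinDWA

/-! ### Combinatorics of two index maps -/

lemma iter_lower (n t : ℕ) (F : ℕ → ℕ) (hF : ∀ j, t ≤ j → j ≤ n → j < F j)
    (x d : ℕ) (hx : t ≤ x) (hm : ∀ m < d, F^[m] x ≤ n) :
    ∀ m ≤ d, x + m ≤ F^[m] x := by
  intro m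
  induction m with
  | zero => intro _; simp
  | succ m ih =>
    intro h
    have h1 := ih (by omega)
    have h2 := hm m (by omega)
    rw [Function.iterate_succ_apply']
    have := hF (F^[m] x) (by omega) h2
    omega

lemma iter_len (n t : ℕ) (F : ℕ → ℕ) (hF : ∀ j, t ≤ j → j ≤ n → j < F j)
    (x d : ℕ) (hx : t ≤ x) (hm : ∀ m < d, F^[m] x ≤ n) (hd : F^[d] x = n + 1) :
    x + d ≤ n + 1 := by
  have := iter_lower n t F hF x d hx hm d le_rfl
  omega

lemma iter_exact (n t : ℕ) (F : ℕ → ℕ) (hF : ∀ j, t ≤ j → j ≤ n → j < F j)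
    (x d : ℕ) (hx : t ≤ x) (hm : ∀ m < d, F^[m] x ≤ n) (hd : F^[d] x = n + 1)
    (he : x + d = n + 1) : ∀ j, x ≤ j → j ≤ n → F j = j + 1 := by
  have key : ∀ m ≤ d, F^[m] x = x + m := by
    intro m hmd
    have h1 := iter_lower n t F hF x d hx hm m hmd
    have h2 := iter_len n t F hF (F^[m] x) (d - m) (by omega)
      (by
        intro k hk
        rw [← Function.iterate_add_apply]
        exact hm _ (by omega))
      (by
        rw [← Function.iterate_add_apply]
        rw [show d - m + m = d by omega]; exact hd)
    omega
  intro j hj hjn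
  have h1 := key (j - x) (by omega)
  have h2 := key (j - x + 1) (by omega)
  rw [Function.iterate_succ_apply', h1] at h2
  rw [show x + (j - x) = j by omega] at h2
  omega

/-- The asymmetric part: `B 0 ≠ 0`, and what follows from it. -/
lemma half (n : ℕ) (hn : 1 < n) (A B : ℕ → ℕ)
    (H1 : ∀ k < n, B^[n - k] (A k) = n + 1 ∧ ∀ m < n - k, B^[m] (A k) ≤ n)
    (H2 : ∀ k < n, A^[n - k] (B k) = n + 1 ∧ ∀ m < n - k, A^[m] (B k) ≤ n)
    (H3 : ∀ j, B 0 ≤ j → j ≤ n → j < A j)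
    (H4 : ∀ j, A 0 ≤ j → j ≤ n → j < B j) :
    B 0 = 1 ∧ ∀ j, 1 ≤ j → j ≤ n → A j = j + 1 := by
  have ht := iter_len n (B 0) A H3 (B 0) n le_rfl (H2 0 (by omega)).2 (H2 0 (by omega)).1
  have hu := iter_len n (A 0) B H4 (A 0) n le_rfl (H1 0 (by omega)).2 (H1 0 (by omega)).1
  have h0 : B 0 ≠ 0 := by
    intro h0
    rw [h0] at H3
    have hA0 : A 0 = 1 := by
      have := H3 0 le_rfl (by omega)
      omega
    have hB : ∀ j, 1 ≤ j → j ≤ n → B j = j + 1 := by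
      have := iter_exact n (A 0) B H4 (A 0) n le_rfl (H1 0 (by omega)).2 (H1 0 (by omega)).1
        (by omega)
      rwa [hA0] at this
    have hB1 := hB 1 le_rfl (by omega)
    have hA2 : ∀ j, 2 ≤ j → j ≤ n → A j = j + 1 := by
      have h := H2 1 hn
      rw [hB1] at h
      exact iter_exact n 0 A H3 2 (n - 1) (by omega) h.2 h.1 (by omega)
    have hA1 : A 1 = 2 := by
      have h := H1 1 hn
      have h' := H3 1 (by omega) (by omega)
      have := iter_len n (A 0) B H4 (A 1) (n - 1) (by omega) h.2 h.1
      omega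
    have hA : ∀ j ≤ n, A j = j + 1 := by
      intro j hj
      rcases j with _ | _ | j
      · exact hA0
      · exact hA1
      · exact hA2 _ (by omega) hj
    have hit : ∀ m ≤ n, A^[m] 0 = m := by
      intro m
      induction m with
      | zero => intro _; rfl
      | succ m ih =>
        intro h
        rw [Function.iterate_succ_apply', ih (by omega), hA _ (by omega)]
    have h := (H2 0 (by omega)).1
    rw [h0] at h
    have := hit n le_rfl
    simp only [Nat.sub_zero] at h
    omega
  have h1 : B 0 = 1 := by omega
  refine ⟨h1, ?_⟩
  have := iter_exact n (B 0) A H3 (B 0) n le_rfl (H2 0 (by omega)).2 (H2 0 (by omega)).1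
    (by omega)
  rwa [h1] at this

/-! ### Computing `Obs` -/

abbrev I (k : ℕ) : List ABI := List.replicate k ABI.i

lemma prefix_i (x y : ABI) (hx : x ≠ ABI.i) (hy : y ≠ ABI.i) (u v : List ABI) :
    ∀ l k : ℕ, (I l ++ x :: u <+: I k ++ y :: v) → l = k ∧ x = y ∧ u <+: v := by
  intro l
  induction l with
  | zero =>
    intro k h
    cases k with
    | zero => simpa [I, List.cons_prefix_cons] using h
    | succ k =>
      simp [I, List.replicate_succ, List.cons_prefix_cons] at h
      exact absurd h.1 hx
  | succ l ih =>
    intro k h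
    cases k with
    | zero =>
      simp [I, List.replicate_succ, List.cons_prefix_cons] at h
      exact absurd h.1.symm hy
    | succ k =>
      simp only [I, List.replicate_succ, List.cons_append, List.cons_prefix_cons, true_and] at h
      have := ih k h
      exact ⟨by omega, this.2⟩

lemma prefix_allI (y : ABI) (hy : y ≠ ABI.i) (v : List ABI) :
    ∀ l k : ℕ, (I l <+: I k ++ y :: v) → l ≤ k := by
  intro l
  induction l with
  | zero => intro k _; omega
  | succ l ih =>
    intro k h
    cases k with
    | zero =>
      simp [I, List.replicate_succ, List.cons_prefix_cons] at h
      exact absurd h.1.symm hy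
    | succ k =>
      simp only [I, List.replicate_succ, List.cons_append, List.cons_prefix_cons, true_and] at h
      have := ih k h
      omega

lemma obs_allI (n j : ℕ) : Obs n (I j) = 1 := by
  unfold Obs
  rw [if_pos]
  left
  intro x hx
  exact List.eq_of_mem_replicate hx

lemma obs_sink (n : ℕ) (w : List ABI) : Obs n (I (n + 1) ++ w) = 1 := by
  unfold Obs
  rw [if_pos]
  right; left
  exact List.prefix_append _ _

lemma obs_ab (n k : ℕ) (hk : k < n) (w : List ABI) :
    Obs n (I k ++ ABI.a :: (List.replicate (n - k) ABI.b ++ w)) = 1 := by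
  unfold Obs
  rw [if_pos]
  right; right; left
  exact ⟨k, hk, w, by simp [I]⟩

lemma obs_ba (n k : ℕ) (hk : k < n) (w : List ABI) :
    Obs n (I k ++ ABI.b :: (List.replicate (n - k) ABI.a ++ w)) = 1 := by
  unfold Obs
  rw [if_pos]
  right; right; right
  exact ⟨k, hk, w, by simp [I]⟩

lemma not_one (n k m : ℕ) (hk : k ≤ n) (hm : m = 0 ∨ m < n - k) (x y : ABI)
    (hx : x ≠ ABI.i) :
    ¬ ((∀ z ∈ I k ++ x :: List.replicate m y, z = ABI.i) ∨
      (List.replicate (n + 1) ABI.i <+: I k ++ x :: List.replicate m y) ∨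
      (∃ l < n, List.replicate l ABI.i ++ [ABI.a] ++ List.replicate (n - l) ABI.b <+:
        I k ++ x :: List.replicate m y) ∨
      (∃ l < n, List.replicate l ABI.i ++ [ABI.b] ++ List.replicate (n - l) ABI.a <+:
        I k ++ x :: List.replicate m y)) := by
  rintro (h | h | ⟨l, hl, h⟩ | ⟨l, hl, h⟩)
  · exact hx (h x (by simp))
  · have := prefix_allI x hx _ _ _ h
    omega
  · rw [List.append_assoc, List.singleton_append] at h
    obtain ⟨h1, h2, h3⟩ := prefix_i _ _ (by simp) hx _ _ _ _ h
    have := h3.length_le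
    simp at this
    omega
  · rw [List.append_assoc, List.singleton_append] at h
    obtain ⟨h1, h2, h3⟩ := prefix_i _ _ (by simp) hx _ _ _ _ h
    have := h3.length_le
    simp at this
    omega

lemma obs_a (n k m : ℕ) (hk : k ≤ n) (hm : m = 0 ∨ m < n - k) (y : ABI) :
    Obs n (I k ++ ABI.a :: List.replicate m y) = 2 := by
  unfold Obs
  rw [if_neg (not_one n k m hk hm _ y (by simp)), if_pos]
  exact ⟨k, List.replicate m y, by simp [I]⟩

lemma not_a (k : ℕ) (v : List ABI) :
    ¬ ∃ l, List.replicate l ABI.i ++ [ABI.a] <+: I k ++ ABI.b :: v := by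
  rintro ⟨l, h⟩
  have := (prefix_i _ _ (by simp) (by simp) _ _ _ _ h).2.1
  simp at this

lemma obs_b (n k m : ℕ) (hk : k ≤ n) (hm : m = 0 ∨ m < n - k) (y : ABI) :
    Obs n (I k ++ ABI.b :: List.replicate m y) = 0 := by
  unfold Obs
  rw [if_neg (not_one n k m hk hm _ y (by simp)), if_neg (not_a _ _)]

lemma obs_start_b (n : ℕ) (v : List ABI) : Obs n (ABI.b :: v) ≠ 2 := by
  have h := not_a 0 v
  simp only [I, List.replicate_zero, List.nil_append] at h
  unfold Obs
  split_ifs <;> simp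

lemma obs_start_a (n : ℕ) (v : List ABI) : Obs n (ABI.a :: v) ≠ 0 := by
  unfold Obs
  rw [if_pos (c := ∃ k, List.replicate k ABI.i ++ [ABI.a] <+: ABI.a :: v) ⟨0, v, by simp⟩]
  split_ifs <;> simp

/-! ### Runs -/

section
variable {Q : Type} (M : DWA ABI Q)

lemma run_append (q : Q) (u v : List ABI) : M.run q (u ++ v) = M.run (M.run q u) v := by
  simp [DWA.run]

lemma run_cons (q : Q) (x : ABI) (v : List ABI) : M.run q (x :: v) = M.run (M.δ q x) v := by
  simp [DWA.run]

lemma valFrom_append (u v : List ABI) : ∀ q : Q,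
    M.valFrom q (u ++ v) = M.valFrom q u + M.valFrom (M.run q u) v := by
  induction u with
  | nil => intro q; simp [DWA.valFrom, DWA.run]
  | cons x u ih =>
    intro q
    simp only [List.cons_append, DWA.valFrom, ih, run_cons]
    ring

lemma cycle (p : Q) (w : List ABI) (hp : M.run p w = p) (k : ℕ) :
    M.valFrom p (List.replicate k w).flatten = k * M.valFrom p w := by
  induction k with
  | zero => simp [DWA.valFrom]
  | succ k ih =>
    rw [List.replicate_succ, List.flatten_cons, valFrom_append, hp, ih]
    push_cast
    ring

end

end MinDWA

open MinDWA

/-- every DWA with exactly `n + 2` states realizing `O_n` is structurally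
isomorphic to the chain automaton. Writing `q j = δ̂(q₀, i^j)` (so `s = q (n+1)`):
the states `q 0, …, q n, q (n+1)` are pairwise distinct; the state `s = q (n+1)` is a sink
whose transitions all have weight `0`; for every `j ≤ n`, `c(q_j, i) = 0`, `c(q_j, a) > 0`
and `c(q_j, b) < 0`; and every transition from `q_j` leads to `q_{j+1}`. -/
theorem minimal_dwa_structure (n : ℕ) (hn : 1 < n) (Q : Type) [Fintype Q]
    (M : DWA ABI Q) (hcard : Fintype.card Q = n + 2) (hM : Realizes n M) :
    let q : ℕ → Q := fun j => M.run M.init (List.replicate j ABI.i)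
    (∀ j k, j ≤ n + 1 → k ≤ n + 1 → j ≠ k → q j ≠ q k) ∧
    (∀ x, M.δ (q (n + 1)) x = q (n + 1) ∧ M.c (q (n + 1)) x = 0) ∧
    (∀ j ≤ n, M.c (q j) ABI.i = 0 ∧ 0 < M.c (q j) ABI.a ∧ M.c (q j) ABI.b < 0) ∧
    (∀ j < n, M.δ (q j) ABI.a = q (j + 1) ∧ M.δ (q j) ABI.b = q (j + 1)) ∧
    (M.δ (q n) ABI.a = q (n + 1) ∧ M.δ (q n) ABI.b = q (n + 1)) := by
  intro q
  have qdef : ∀ j, q j = M.run M.init (I j) := fun j => rfl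
  have qi : ∀ j m, M.run (q j) (I m) = q (j + m) := by
    intro j m
    rw [qdef, qdef, ← run_append]
    simp [I]
  have qs : ∀ j, M.δ (q j) ABI.i = q (j + 1) := by
    intro j
    have := qi j 1
    simpa [I, DWA.run] using this
  have val0 : ∀ w, w ≠ [] → Obs n w = 1 → M.val w = 0 := fun w h h' => (hM w h).2.1.2 h'
  have valI : ∀ j, M.valFrom M.init (I j) = 0 := by
    intro j
    cases j with
    | zero => rfl
    | succ j => exact val0 _ (by simp [I]) (obs_allI n _)
  have valI' : ∀ j w, M.val (I j ++ w) = M.valFrom (q j) w := by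
    intro j w
    rw [DWA.val, valFrom_append, valI, zero_add]
  have vali : ∀ j m, M.valFrom (q j) (I m) = 0 := by
    intro j m
    rw [← valI' j, DWA.val]
    have := valI (j + m)
    simpa [I] using this
  have ci : ∀ j, M.c (q j) ABI.i = 0 := by
    intro j
    have := vali j 1
    simpa [I, DWA.valFrom] using this
  have ca : ∀ j ≤ n, 0 < M.c (q j) ABI.a := by
    intro j hj
    have h := (hM _ (by simp)).2.2.2 (obs_a n j 0 hj (Or.inl rfl) ABI.b)
    rw [valI'] at h
    simpa [DWA.valFrom] using h
  have cb : ∀ j ≤ n, M.c (q j) ABI.b < 0 := by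
    intro j hj
    have h := (hM _ (by simp)).1.2 (obs_b n j 0 hj (Or.inl rfl) ABI.b)
    rw [valI'] at h
    simpa [DWA.valFrom] using h
  have sv : ∀ w, M.valFrom (q (n + 1)) w = 0 := by
    intro w
    rw [← valI']
    exact val0 _ (by simp [I]) (obs_sink n w)
  have cs : ∀ x, M.c (q (n + 1)) x = 0 := by
    intro x
    have := sv [x]
    simpa [DWA.valFrom] using this
  have nes : ∀ j ≤ n, q j ≠ q (n + 1) := by
    intro j hj h
    have h1 := ca j hj
    rw [h, cs] at h1
    exact lt_irrefl _ h1
  have dist' : ∀ j k, j < k → k ≤ n + 1 → q j ≠ q k := by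
    intro j k hjk hk h
    apply nes (j + (n + 1 - k)) (by omega)
    rw [← qi, h, qi]
    congr 1
    omega
  have dist : ∀ j k, j ≤ n + 1 → k ≤ n + 1 → j ≠ k → q j ≠ q k := by
    intro j k hj hk hjk
    rcases Nat.lt_or_gt_of_ne hjk with h | h
    · exact dist' j k h hk
    · exact (dist' k j h hj).symm
  have surj : ∀ p : Q, ∃ j, j ≤ n + 1 ∧ q j = p := by
    have hinj : Function.Injective (fun j : Fin (n + 2) => q j) := by
      intro j k h
      by_contra hne
      exact dist j k (by omega) (by omega) (fun h' => hne (Fin.ext h')) h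
    have hb := (Fintype.bijective_iff_injective_and_card _).2 ⟨hinj, by simp [hcard]⟩
    intro p
    obtain ⟨j, hj⟩ := hb.2 p
    exact ⟨j, by omega, hj⟩
  choose idx hidx hq using surj
  have idxq : ∀ j ≤ n + 1, idx (q j) = j := by
    intro j hj
    by_contra hne
    exact dist _ _ (hidx _) hj hne (hq _)
  have sink_of : ∀ p, (∀ w, M.valFrom p w = 0) → p = q (n + 1) := by
    intro p hp
    by_contra hne
    have h1 : idx p ≠ n + 1 := fun h => hne (by rw [← h, hq])
    have h2 := ca (idx p) (by have := hidx p; omega)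
    rw [hq] at h2
    have := hp [ABI.a]
    simp [DWA.valFrom] at this
    omega
  have ds : ∀ x, M.δ (q (n + 1)) x = q (n + 1) := by
    intro x
    apply sink_of
    intro w
    have h1 := sv (x :: w)
    rw [DWA.valFrom, cs] at h1
    simpa using h1
  -- iterates
  have iter : ∀ (x : ABI) (m l : ℕ),
      q ((fun j => idx (M.δ (q j) x))^[m] l) = M.run (q l) (List.replicate m x) := by
    intro x m
    induction m with
    | zero => intro l; rfl
    | succ m ih =>
      intro l
      rw [Function.iterate_succ_apply, ih, List.replicate_succ, run_cons, hq]
  have iter_le : ∀ (x y : ABI) (m l : ℕ), (fun j => idx (M.δ (q j) x))^[m] (idx (M.δ (q l) y))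
      ≤ n + 1 := by
    intro x y m l
    cases m with
    | zero => exact hidx _
    | succ m => rw [Function.iterate_succ_apply']; exact hidx _
  -- general distance statement
  have distg : ∀ x y : ABI, ∀ k < n,
      (∀ w, M.val (I k ++ x :: (List.replicate (n - k) y ++ w)) = 0) →
      (∀ m < n - k, M.val (I k ++ x :: List.replicate m y) ≠ 0) →
      (fun j => idx (M.δ (q j) y))^[n - k] (idx (M.δ (q k) x)) = n + 1 ∧
      ∀ m < n - k, (fun j => idx (M.δ (q j) y))^[m] (idx (M.δ (q k) x)) ≤ n := by
    intro x y k hk h0 h1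
    constructor
    · have h2 : q ((fun j => idx (M.δ (q j) y))^[n - k] (idx (M.δ (q k) x))) = q (n + 1) := by
        apply sink_of
        intro w
        rw [iter, hq]
        have e1 := h0 w
        have e2 := h0 []
        rw [valI', DWA.valFrom, valFrom_append] at e1 e2
        simp only [DWA.valFrom] at e2
        omega
      by_contra hne
      exact dist _ _ (iter_le y x _ _) le_rfl hne h2
    · intro m hm
      by_contra hgt
      have h2 : (fun j => idx (M.δ (q j) y))^[m] (idx (M.δ (q k) x)) = n + 1 := by
        have := iter_le y x m k
        omega
      have h3 := iter y m (idx (M.δ (q k) x))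
      rw [h2, hq] at h3
      apply h1 m hm
      have e1 := h0 []
      rw [show n - k = m + (n - k - m) by omega, List.replicate_add, valI', DWA.valFrom,
        List.append_assoc, valFrom_append, ← h3, sv] at e1
      rw [valI', DWA.valFrom]
      simpa using e1
  -- words looping on a backward edge
  have loop : ∀ x y : ABI, ∀ j ≤ n, idx (M.δ (q 0) y) ≤ j → idx (M.δ (q j) x) ≤ j → ∀ k : ℕ,
      ∃ v, M.val (y :: v) = M.c (q 0) y + k * M.c (q j) x := by
    intro x y j hj h1 h2 k
    refine ⟨I (j - idx (M.δ (q 0) y)) ++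
      (List.replicate k (x :: I (j - idx (M.δ (q j) x)))).flatten, ?_⟩
    have hr : M.run (q j) (x :: I (j - idx (M.δ (q j) x))) = q j := by
      rw [run_cons]
      conv_lhs => rw [← hq (M.δ (q j) x)]
      rw [qi, idxq _ (hidx _)]
      congr 1
      omega
    have hv : M.valFrom (q j) (x :: I (j - idx (M.δ (q j) x))) = M.c (q j) x := by
      rw [DWA.valFrom, ← hq (M.δ (q j) x), vali, add_zero]
    have hr0 : M.run (M.δ (q 0) y) (I (j - idx (M.δ (q 0) y))) = q j := by
      conv_lhs => rw [← hq (M.δ (q 0) y)]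
      rw [qi, idxq _ (hidx _)]
      congr 1
      omega
    have hv0 : M.valFrom (M.δ (q 0) y) (I (j - idx (M.δ (q 0) y))) = 0 := by
      conv_lhs => rw [← hq (M.δ (q 0) y)]
      exact vali _ _
    have := valI' 0 (y :: (I (j - idx (M.δ (q 0) y)) ++
      (List.replicate k (x :: I (j - idx (M.δ (q j) x)))).flatten))
    simp only [I, List.replicate_zero, List.nil_append] at this
    rw [this, DWA.valFrom, valFrom_append, hr0, hv0, cycle M _ _ hr, hv]
    ring
  have H1 := fun k hk => distg ABI.a ABI.b k hk
    (fun w => val0 _ (by simp) (obs_ab n k hk w))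
    (fun m hm => ((hM _ (by simp)).2.2.2 (obs_a n k m hk.le (Or.inr hm) ABI.b)).ne')
  have H2 := fun k hk => distg ABI.b ABI.a k hk
    (fun w => val0 _ (by simp) (obs_ba n k hk w))
    (fun m hm => ((hM _ (by simp)).1.2 (obs_b n k m hk.le (Or.inr hm) ABI.a)).ne)
  have H3 : ∀ j, idx (M.δ (q 0) ABI.b) ≤ j → j ≤ n → j < idx (M.δ (q j) ABI.a) := by
    intro j h1 hj
    by_contra h2
    obtain ⟨v, hv⟩ := loop ABI.a ABI.b j hj h1 (by omega) ((M.c (q 0) ABI.b).natAbs + 1)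
    have h3 := ca j hj
    apply obs_start_b n v
    apply (hM _ (by simp)).2.2.1
    rw [hv]
    push_cast
    have h4 := neg_abs_le (M.c (q 0) ABI.b)
    have h5 := abs_nonneg (M.c (q 0) ABI.b)
    nlinarith
  have H4 : ∀ j, idx (M.δ (q 0) ABI.a) ≤ j → j ≤ n → j < idx (M.δ (q j) ABI.b) := by
    intro j h1 hj
    by_contra h2
    obtain ⟨v, hv⟩ := loop ABI.b ABI.a j hj h1 (by omega) ((M.c (q 0) ABI.a).natAbs + 1)
    have h3 := cb j hj
    apply obs_start_a n v
    apply (hM _ (by simp)).1.1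
    rw [hv]
    push_cast
    have h4 := le_abs_self (M.c (q 0) ABI.a)
    have h5 := abs_nonneg (M.c (q 0) ABI.a)
    nlinarith
  have R1 := half n hn (fun j => idx (M.δ (q j) ABI.a)) (fun j => idx (M.δ (q j) ABI.b))
    H1 H2 H3 H4
  have R2 := half n hn (fun j => idx (M.δ (q j) ABI.b)) (fun j => idx (M.δ (q j) ABI.a))
    H2 H1 H4 H3
  have fin_a : ∀ j ≤ n, M.δ (q j) ABI.a = q (j + 1) := by
    intro j hj
    have h : idx (M.δ (q j) ABI.a) = j + 1 := by
      rcases j with _ | j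
      · exact R2.1
      · exact R1.2 _ (by omega) hj
    rw [← h, hq]
  have fin_b : ∀ j ≤ n, M.δ (q j) ABI.b = q (j + 1) := by
    intro j hj
    have h : idx (M.δ (q j) ABI.b) = j + 1 := by
      rcases j with _ | j
      · exact R1.1
      · exact R2.2 _ (by omega) hj
    rw [← h, hq]
  exact ⟨dist, fun x => ⟨ds x, cs x⟩, fun j hj => ⟨ci j, ca j hj, cb j hj⟩,
    fun j hj => ⟨fin_a j hj.le, fin_b j hj.le⟩, fin_a n le_rfl, fin_b n le_rfl⟩
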